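/- In a finite MDP, the map π ↦ ρ_π from stationary stochastic policies to occupancy measures is a bijection onto the set of measures satisfying the Bellman flow constraints, with inverse ρ ↦ π(a|s) = ρ(s,a)/Σ_{a'} ρ(s,a') (defined at states with positive marginal). -/

import Mathlib

/-- The discounted flow equation of a row-stochastic matrix has at most one solution. -/
theorem discounted_flow_unique {S : Type*} [Fintype S] {γ : ℝ} (hγ0 : 0 ≤ γ) (hγ1 : γ < 1)
    {M : S → S → ℝ} (hM : ∀ s s', 0 ≤ M s s') (hMsum : ∀ s, ∑ s', M s s' = 1)
    {c x y : S → ℝ} (hx : ∀ s', x s' = c s' + γ * ∑ s, x s * M s s')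
    (hy : ∀ s', y s' = c s' + γ * ∑ s, y s * M s s') : x = y := by
  have hz : ∀ s', |x s' - y s'| ≤ γ * ∑ s, |x s - y s| * M s s' := by
    intro s'
    have h : x s' - y s' = γ * ∑ s, (x s - y s) * M s s' := by
      rw [hx s', hy s']
      simp only [sub_mul, Finset.sum_sub_distrib]
      ring
    rw [h, abs_mul, abs_of_nonneg hγ0]
    refine mul_le_mul_of_nonneg_left ((Finset.abs_sum_le_sum_abs _ _).trans_eq ?_) hγ0
    exact Finset.sum_congr rfl fun s _ => by rw [abs_mul, abs_of_nonneg (hM s s')]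
  have hsum : ∑ s, |x s - y s| ≤ γ * ∑ s, |x s - y s| := by
    refine (Finset.sum_le_sum fun s' _ => hz s').trans_eq ?_
    rw [← Finset.mul_sum, Finset.sum_comm]
    simp only [← Finset.mul_sum, hMsum, mul_one]
  have hnn : 0 ≤ ∑ s, |x s - y s| := Finset.sum_nonneg fun s _ => abs_nonneg _
  have h0 : ∑ s, |x s - y s| = 0 := by nlinarith
  rw [Finset.sum_eq_zero_iff_of_nonneg fun s _ => abs_nonneg _] at h0
  funext s
  exact sub_eq_zero.1 (abs_eq_zero.1 (h0 s (Finset.mem_univ s)))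

/-- The discounted sum of the state distributions of a Markov chain dominates the initial
distribution and solves the discounted flow equation. -/
theorem discounted_sum_flow {S : Type*} [Fintype S] {γ : ℝ} (hγ0 : 0 ≤ γ) (hγ1 : γ < 1)
    {M : S → S → ℝ} (hM : ∀ s s', 0 ≤ M s s') (hMsum : ∀ s, ∑ s', M s s' = 1)
    {d : ℕ → S → ℝ} (hd0 : ∀ s, 0 ≤ d 0 s) (hd0sum : ∑ s, d 0 s = 1)
    (hd : ∀ t s', d (t + 1) s' = ∑ s, d t s * M s s') :
    (∀ s, d 0 s ≤ ∑' t, γ ^ t * d t s) ∧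
      ∀ s', ∑' t, γ ^ t * d t s' = d 0 s' + γ * ∑ s, (∑' t, γ ^ t * d t s) * M s s' := by
  have hnn : ∀ t s, 0 ≤ d t s := by
    intro t
    induction t with
    | zero => exact hd0
    | succ t ih =>
      intro s
      rw [hd]
      exact Finset.sum_nonneg fun i _ => mul_nonneg (ih i) (hM i s)
  have hsum : ∀ t, ∑ s, d t s = 1 := by
    intro t
    induction t with
    | zero => exact hd0sum
    | succ t ih =>
      simp only [hd]
      rw [Finset.sum_comm]
      simpa only [← Finset.mul_sum, hMsum, mul_one] using ih
  have hle : ∀ t s, d t s ≤ 1 := fun t s =>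
    (Finset.single_le_sum (fun i _ => hnn t i) (Finset.mem_univ s)).trans_eq (hsum t)
  have hS : ∀ s, Summable fun t => γ ^ t * d t s := fun s =>
    Summable.of_nonneg_of_le (fun t => mul_nonneg (pow_nonneg hγ0 t) (hnn t s))
      (fun t => mul_le_of_le_one_right (pow_nonneg hγ0 t) (hle t s))
      (summable_geometric_of_lt_one hγ0 hγ1)
  have hflow : ∀ s',
      ∑' t, γ ^ t * d t s' = d 0 s' + γ * ∑ s, (∑' t, γ ^ t * d t s) * M s s' := by
    intro s'
    rw [(hS s').tsum_eq_zero_add, pow_zero, one_mul]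
    congr 1
    simp only [← tsum_mul_right]
    rw [← Summable.tsum_finsetSum fun s _ => (hS s).mul_right _, ← tsum_mul_left]
    refine tsum_congr fun t => ?_
    rw [hd, Finset.mul_sum, Finset.mul_sum]
    exact Finset.sum_congr rfl fun s _ => by ring
  refine ⟨fun s => ?_, hflow⟩
  simpa using (hS s).le_tsum 0 fun t _ => mul_nonneg (pow_nonneg hγ0 t) (hnn t s)

/-- The map π ↦ ρ_π from stationary stochastic policies to (normalized) occupancy
measures is a bijection onto the set of measures satisfying the Bellman flow
constraints, with inverse ρ ↦ π(a|s) = ρ(s,a)/Σ_{a'} ρ(s,a'). -/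
theorem policy_occupancy_bijection
    {S A : Type*} [Fintype S] [Fintype A] [Nonempty S] [Nonempty A]
    (γ : ℝ) (hγ0 : 0 < γ) (hγ1 : γ < 1)
    (p0 : S → ℝ) (hp0pos : ∀ s, 0 < p0 s) (hp0sum : ∑ s, p0 s = 1)
    (P : S → A → S → ℝ) (hPnn : ∀ s a s', 0 ≤ P s a s')
    (hPsum : ∀ s a, ∑ s', P s a s' = 1)
    -- state distribution at each time step under a policy
    (d : (S → A → ℝ) → ℕ → S → ℝ) (hd0 : ∀ π, d π 0 = p0)
    (hdsucc : ∀ π t s', d π (t + 1) s' = ∑ s, ∑ a, d π t s * π s a * P s a s')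
    -- normalized occupancy measure of a policy
    (occ : (S → A → ℝ) → S → A → ℝ)
    (hocc : ∀ π s a, occ π s a = (1 - γ) * (π s a * ∑' t : ℕ, γ ^ t * d π t s))
    -- the set of stationary stochastic policies
    (Pol : Set (S → A → ℝ))
    (hPol : Pol = {π | (∀ s a, 0 ≤ π s a) ∧ ∀ s, ∑ a, π s a = 1})
    -- the set of occupancy measures satisfying the Bellman flow constraints
    (Flow : Set (S → A → ℝ))
    (hFlow : Flow = {ρ | (∀ s a, 0 ≤ ρ s a) ∧
      ∀ s, ∑ a, ρ s a = (1 - γ) * p0 s + γ * ∑ s', ∑ a', P s' a' s * ρ s' a'}) :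
    Set.BijOn occ Pol Flow ∧
      ∀ π ∈ Pol, ∀ s a, π s a = occ π s a / ∑ a', occ π s a' := by
  subst hPol hFlow
  have h1γ : 0 < 1 - γ := sub_pos.2 hγ1
  have hM : ∀ π : S → A → ℝ, (∀ s a, 0 ≤ π s a) → ∀ s s', 0 ≤ ∑ a, π s a * P s a s' :=
    fun π h s s' => Finset.sum_nonneg fun a _ => mul_nonneg (h s a) (hPnn s a s')
  have hMsum : ∀ π : S → A → ℝ, (∀ s, ∑ a, π s a = 1) →
      ∀ s, ∑ s', ∑ a, π s a * P s a s' = 1 := by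
    intro π h s
    rw [Finset.sum_comm]
    simpa only [← Finset.mul_sum, hPsum, mul_one] using h s
  have key : ∀ π : S → A → ℝ, (∀ s a, 0 ≤ π s a) → (∀ s, ∑ a, π s a = 1) →
      (∀ s, 0 < ∑' t, γ ^ t * d π t s) ∧
      ∀ s', ∑' t, γ ^ t * d π t s' =
        p0 s' + γ * ∑ s, (∑' t, γ ^ t * d π t s) * ∑ a, π s a * P s a s' := by
    intro π h0 h1
    obtain ⟨hpos, hflow⟩ := discounted_sum_flow hγ0.le hγ1 (hM π h0) (hMsum π h1)
      (d := d π) (fun s => by rw [hd0]; exact (hp0pos s).le) (by rw [hd0]; exact hp0sum)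
      (fun t s' => by simp only [hdsucc, Finset.mul_sum, mul_assoc])
    rw [hd0] at hpos hflow
    exact ⟨fun s => (hp0pos s).trans_le (hpos s), hflow⟩
  have hmarg : ∀ π : S → A → ℝ, (∀ s, ∑ a, π s a = 1) → ∀ s,
      ∑ a, occ π s a = (1 - γ) * ∑' t, γ ^ t * d π t s := by
    intro π h1 s
    simp only [hocc]
    rw [← Finset.mul_sum, ← Finset.sum_mul, h1, one_mul]
  have hinv : ∀ π ∈ {π : S → A → ℝ | (∀ s a, 0 ≤ π s a) ∧ ∀ s, ∑ a, π s a = 1}, ∀ s a,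
      π s a = occ π s a / ∑ a', occ π s a' := by
    rintro π ⟨h0, h1⟩ s a
    have hx := (key π h0 h1).1 s
    rw [hmarg π h1, hocc, eq_div_iff (mul_pos h1γ hx).ne']
    ring
  refine ⟨⟨?_, ?_, ?_⟩, hinv⟩
  · rintro π ⟨h0, h1⟩
    obtain ⟨hpos, hflow⟩ := key π h0 h1
    refine ⟨fun s a => ?_, fun s => ?_⟩
    · rw [hocc]
      exact mul_nonneg h1γ.le (mul_nonneg (h0 s a) (hpos s).le)
    · rw [hmarg π h1, hflow s, mul_add, mul_left_comm, Finset.mul_sum]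
      congr 2
      refine Finset.sum_congr rfl fun s' _ => ?_
      rw [Finset.mul_sum, Finset.mul_sum]
      exact Finset.sum_congr rfl fun a _ => by rw [hocc]; ring
  · intro π hπ π' hπ' h
    funext s a
    rw [hinv π hπ, hinv π' hπ', h]
  · rintro ρ ⟨hρ0, hρ⟩
    have hm : ∀ s, 0 < ∑ a, ρ s a := by
      intro s
      rw [hρ s]
      exact add_pos_of_pos_of_nonneg (mul_pos h1γ (hp0pos s)) (mul_nonneg hγ0.le
        (Finset.sum_nonneg fun s' _ => Finset.sum_nonneg fun a' _ =>
          mul_nonneg (hPnn s' a' s) (hρ0 s' a')))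
    let π : S → A → ℝ := fun s a => ρ s a / ∑ a', ρ s a'
    have hπρ : ∀ s a, (∑ a', ρ s a') * π s a = ρ s a := fun s a =>
      mul_div_cancel₀ _ (hm s).ne'
    have h0 : ∀ s a, 0 ≤ π s a := fun s a => div_nonneg (hρ0 s a) (hm s).le
    have h1 : ∀ s, ∑ a, π s a = 1 := fun s => by
      rw [← Finset.sum_div, div_self (hm s).ne']
    have hxm : (fun s => (1 - γ) * ∑' t, γ ^ t * d π t s) = fun s => ∑ a, ρ s a := by
      refine discounted_flow_unique hγ0.le hγ1 (hM π h0) (hMsum π h1)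
        (c := fun s => (1 - γ) * p0 s) (fun s' => ?_) (fun s' => ?_)
      · simp only [mul_assoc (1 - γ)]
        rw [← Finset.mul_sum, (key π h0 h1).2 s']
        ring
      · refine (hρ s').trans ?_
        congr 2
        refine Finset.sum_congr rfl fun s _ => ?_
        rw [Finset.mul_sum]
        exact Finset.sum_congr rfl fun a _ => by rw [← mul_assoc, hπρ, mul_comm]
    refine ⟨π, ⟨h0, h1⟩, ?_⟩
    funext s a
    rw [hocc, mul_left_comm, congrFun hxm s, mul_comm, hπρ]
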